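/- arXiv:2510.04902 — 2 statements merged into one kernel-verified Lean document; each statement's English description precedes it below -/
import Mathlib

section
/- Let n be a positive natural number and let v₁, …, vₙ and v₁', …, vₙ' : Fin p → ℝ be vectors such that every coordinate of every vᵢ and vᵢ' lies in {0, 1}, the coordinate sum of each vᵢ and each vᵢ' equals k, and there is an index u ∈ Fin n with vᵢ = vᵢ' for all i ≠ u. Then sqrt(∑_{j} ((∑_{i} vᵢ j) - (∑_{i} vᵢ' j))^2) ≤ sqrt(2k), i.e., the aggregated vote vectors ∑ᵢ vᵢ and ∑ᵢ vᵢ' are at Euclidean distance at most sqrt(2k). -/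
open Finset

theorem mem_Icc_of_eq_zero_or_eq_one {R : Type*} [Zero R] [One R] [Preorder R] [ZeroLEOneClass R]
    {a : R} (h : a = 0 ∨ a = 1) : a ∈ Set.Icc 0 1 := by
  rcases h with rfl | rfl
  · exact Set.left_mem_Icc.mpr zero_le_one
  · exact Set.right_mem_Icc.mpr zero_le_one

theorem sq_sub_le_add_of_mem_Icc {R : Type*} [CommRing R] [PartialOrder R] [IsOrderedRing R]
    {a b : R} (ha : a ∈ Set.Icc 0 1) (hb : b ∈ Set.Icc 0 1) : (a - b) ^ 2 ≤ a + b := by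
  have hab : 0 ≤ a * b := mul_nonneg ha.1 hb.1
  calc (a - b) ^ 2 = a ^ 2 + b ^ 2 - (a * b + a * b) := by ring
    _ ≤ a ^ 2 + b ^ 2 := sub_le_self _ (add_nonneg hab hab)
    _ ≤ a + b := add_le_add (pow_le_of_le_one ha.1 ha.2 two_ne_zero)
        (pow_le_of_le_one hb.1 hb.2 two_ne_zero)

theorem sum_sq_sub_le_sum_add_sum {κ R : Type*} [CommRing R] [PartialOrder R] [IsOrderedRing R]
    {s : Finset κ} {x y : κ → R} (hx : ∀ j ∈ s, x j ∈ Set.Icc 0 1)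
    (hy : ∀ j ∈ s, y j ∈ Set.Icc 0 1) :
    ∑ j ∈ s, (x j - y j) ^ 2 ≤ ∑ j ∈ s, x j + ∑ j ∈ s, y j := by
  rw [← sum_add_distrib]
  exact sum_le_sum fun j hj ↦ sq_sub_le_add_of_mem_Icc (hx j hj) (hy j hj)

theorem sum_sub_sum_eq_sub_of_forall_ne {ι M : Type*} [Fintype ι] [AddCommGroup M]
    {f g : ι → M} {u : ι} (h : ∀ i, i ≠ u → f i = g i) :
    ∑ i, f i - ∑ i, g i = f u - g u := by
  rw [← sum_sub_distrib]
  exact Fintype.sum_eq_single u fun i hi ↦ sub_eq_zero.mpr (h i hi)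

theorem stmt_2_general {ι κ : Type*} [Fintype ι] [Fintype κ] {k : ℝ} {v v' : ι → κ → ℝ} {u : ι}
    (hv : ∀ j, v u j ∈ Set.Icc 0 1) (hv' : ∀ j, v' u j ∈ Set.Icc 0 1)
    (hsum : ∑ j, v u j ≤ k) (hsum' : ∑ j, v' u j ≤ k) (hneighbor : ∀ i, i ≠ u → v i = v' i) :
    Real.sqrt (∑ j, ((∑ i, v i j) - (∑ i, v' i j)) ^ 2) ≤ Real.sqrt (2 * k) := by
  have aggregate_sub (j : κ) : ∑ i, v i j - ∑ i, v' i j = v u j - v' u j :=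
    sum_sub_sum_eq_sub_of_forall_ne fun i hi ↦ congrFun (hneighbor i hi) j
  apply Real.sqrt_le_sqrt
  calc ∑ j, (∑ i, v i j - ∑ i, v' i j) ^ 2
      = ∑ j, (v u j - v' u j) ^ 2 := by simp only [aggregate_sub]
    _ ≤ ∑ j, v u j + ∑ j, v' u j :=
        sum_sq_sub_le_sum_add_sum (fun j _ ↦ hv j) (fun j _ ↦ hv' j)
    _ ≤ k + k := add_le_add hsum hsum'
    _ = 2 * k := (two_mul k).symm

theorem stmt_2 (n p k : ℕ) (hn : 0 < n) (v v' : Fin n → Fin p → ℝ)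
    (hv : ∀ i j, v i j = 0 ∨ v i j = 1) (hv' : ∀ i j, v' i j = 0 ∨ v' i j = 1)
    (hsum : ∀ i, ∑ j, v i j = k) (hsum' : ∀ i, ∑ j, v' i j = k)
    (hneighbor : ∃ u : Fin n, ∀ i, i ≠ u → v i = v' i) :
    Real.sqrt (∑ j, ((∑ i, v i j) - (∑ i, v' i j)) ^ 2) ≤ Real.sqrt (2 * k) := by
  obtain ⟨u, hu⟩ := hneighbor
  exact stmt_2_general (fun j ↦ mem_Icc_of_eq_zero_or_eq_one (hv u j))
    (fun j ↦ mem_Icc_of_eq_zero_or_eq_one (hv' u j)) (hsum u).le (hsum' u).le hu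
end

section
/- Let σ > 0, α > 1 be real numbers and μ, μ' ∈ ℝ. Then ∫_{ℝ} (φ_{μ,σ²}(x))^α · (φ_{μ',σ²}(x))^{1-α} dx = exp(α(α-1)(μ-μ')²/(2σ²)), where φ_{m,σ²}(x) = (1/(σ√(2π))) · exp(-(x-m)²/(2σ²)) is the density of the normal distribution N(m, σ²). -/
open MeasureTheory Real

/-- Density of the normal distribution `N(m, σ²)`. -/
noncomputable def normalPdf (m σ x : ℝ) : ℝ :=
  (1 / (σ * Real.sqrt (2 * Real.pi))) * Real.exp (-(x - m) ^ 2 / (2 * σ ^ 2))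

/-!
Completing the square in an affine combination of `(x - μ)²` and `(x - μ')²` shows that a weighted
geometric mean of two Gaussian densities of equal variance is a constant multiple of the Gaussian
density centred at the weighted mean. The integral is therefore that constant.
-/

open ProbabilityTheory

theorem mul_sub_sq_add_mul_sub_sq {R : Type*} [CommRing R] {a b : R} (hab : a + b = 1)
    (x y z : R) :
    a * (x - y) ^ 2 + b * (x - z) ^ 2 = (x - (a * y + b * z)) ^ 2 + a * b * (y - z) ^ 2 := by
  obtain rfl : b = 1 - a := eq_sub_of_add_eq' hab
  ring

section NormalPdf

variable {σ : ℝ}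

theorem normalPdf_eq_gaussianPDFReal (hσ : 0 ≤ σ) (m : ℝ) :
    normalPdf m σ = gaussianPDFReal m (σ ^ 2).toNNReal := by
  have sqrt_variance : √(2 * π * σ ^ 2) = σ * √(2 * π) := by
    rw [sqrt_mul (by positivity), sqrt_sq hσ, mul_comm]
  ext x
  rw [normalPdf, gaussianPDFReal, coe_toNNReal _ (sq_nonneg σ), sqrt_variance, one_div]

theorem integral_normalPdf_eq_one (hσ : 0 < σ) (m : ℝ) : ∫ x, normalPdf m σ x = 1 := by
  rw [normalPdf_eq_gaussianPDFReal hσ.le]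
  exact integral_gaussianPDFReal_eq_one m (toNNReal_pos.2 (by positivity)).ne'

theorem normalPdf_rpow (hσ : 0 ≤ σ) (m x a : ℝ) :
    normalPdf m σ x ^ a =
      (1 / (σ * √(2 * π))) ^ a * exp (-(a * (x - m) ^ 2) / (2 * σ ^ 2)) := by
  rw [normalPdf, mul_rpow (by positivity) (exp_pos _).le, ← exp_mul]
  ring_nf

theorem normalPdf_rpow_mul_normalPdf_rpow (hσ : 0 < σ) {a b : ℝ} (hab : a + b = 1)
    (μ μ' x : ℝ) :
    normalPdf μ σ x ^ a * normalPdf μ' σ x ^ b =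
      exp (-(a * b * (μ - μ') ^ 2) / (2 * σ ^ 2)) * normalPdf (a * μ + b * μ') σ x := by
  set c := 1 / (σ * √(2 * π)) with hc
  have normalization : c ^ a * c ^ b = c := by
    rw [← rpow_add (by positivity), hab, rpow_one]
  have exponent : -(a * (x - μ) ^ 2) / (2 * σ ^ 2) + -(b * (x - μ') ^ 2) / (2 * σ ^ 2) =
      -(a * b * (μ - μ') ^ 2) / (2 * σ ^ 2) + -(x - (a * μ + b * μ')) ^ 2 / (2 * σ ^ 2) := by
    rw [← add_div, ← neg_add, mul_sub_sq_add_mul_sub_sq hab]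
    ring
  rw [normalPdf_rpow hσ.le, normalPdf_rpow hσ.le, ← hc, mul_mul_mul_comm, normalization,
    ← exp_add, exponent, exp_add, mul_left_comm, normalPdf]

end NormalPdf

theorem stmt_3_general (σ α : ℝ) (hσ : 0 < σ) (μ μ' : ℝ) :
    ∫ x : ℝ, (normalPdf μ σ x) ^ α * (normalPdf μ' σ x) ^ (1 - α) =
      Real.exp (α * (α - 1) * (μ - μ') ^ 2 / (2 * σ ^ 2)) := by
  simp_rw [normalPdf_rpow_mul_normalPdf_rpow hσ (add_sub_cancel α 1)]
  rw [integral_const_mul, integral_normalPdf_eq_one hσ, mul_one]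
  ring_nf

theorem stmt_3 (σ α : ℝ) (hσ : 0 < σ) (hα : 1 < α) (μ μ' : ℝ) :
    ∫ x : ℝ, (normalPdf μ σ x) ^ α * (normalPdf μ' σ x) ^ (1 - α) =
      Real.exp (α * (α - 1) * (μ - μ') ^ 2 / (2 * σ ^ 2)) :=
  stmt_3_general σ α hσ μ μ'
end
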